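/- In the online Ramsey game with targets red C₄ and blue P₆, consider the position in which the five edges v₁v₂, v₂v₃, v₃v₄, v₄v₅, v₅v₆ of a path on six distinct vertices have been colored red, blue, red, red, blue respectively (case R7). From this position Builder can force a red copy of C₄ or a blue copy of P₆ within at most 6 additional rounds, so within at most 11 rounds in total. -/

import Mathlib

open SimpleGraph

/-- The set `S` of edges of the infinite complete graph on `ℕ` contains a copy of
the graph `G`: there is an injective map of the vertices of `G` into `ℕ` sending
every edge of `G` into `S`. -/
def HasCopy {V : Type*} (G : SimpleGraph V) (S : Set (Sym2 ℕ)) : Prop :=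
  ∃ f : V → ℕ, Function.Injective f ∧ ∀ a b, G.Adj a b → s(f a, f b) ∈ S

/-- `BuilderWinsIn G H R B r` means: in the online Ramsey game with targets a red copy
of `G` and a blue copy of `H`, from the position in which the edges in `R` have been
colored red and the edges in `B` have been colored blue, Builder has a strategy that
guarantees, against every Painter strategy, that within at most `r` further rounds the
colored edges contain a red copy of `G` or a blue copy of `H`.  (In each round Builder
chooses a previously unchosen non-loop edge of the infinite complete graph on `ℕ`, and
Painter immediately colors it red or blue; so Builder wins within `r + 1` rounds iff he
has already won, or he can choose an edge such that whichever color Painter gives it,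
he can win within `r` further rounds.) -/
def BuilderWinsIn {V W : Type*} (G : SimpleGraph V) (H : SimpleGraph W) :
    Set (Sym2 ℕ) → Set (Sym2 ℕ) → ℕ → Prop
  | R, B, 0 => HasCopy G R ∨ HasCopy H B
  | R, B, (r + 1) => HasCopy G R ∨ HasCopy H B ∨
      ∃ e : Sym2 ℕ, ¬ e.IsDiag ∧ e ∉ R ∧ e ∉ B ∧
        BuilderWinsIn G H (insert e R) B r ∧ BuilderWinsIn G H R (insert e B) r

/-- The online size Ramsey number `ř(G, H)`: the least `t` such that, starting from the
empty position, Builder can force a red copy of `G` or a blue copy of `H` within at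
most `t` rounds. -/
noncomputable def onlineRamsey {V W : Type*} (G : SimpleGraph V) (H : SimpleGraph W) : ℕ :=
  sInf {t | BuilderWinsIn G H ∅ ∅ t}

/-!
A red path on four vertices lets Builder force the edge joining its ends to be blue, since a red
answer closes a `C₄`. Positions are monotone in both color classes and in the number of rounds, so
Builder may play as if every edge he needs were still uncolored.

Builder first plays `v₁v₃`. A red answer makes `v₂v₁v₃v₄v₅` a red path, which forces `v₂v₄` and
`v₁v₅` to be blue and leaves the two blue paths `v₃v₂v₄` and `v₁v₅v₆` to be joined. After a blue
answer he plays `v₂v₄`. If it is blue, the blue path `v₄v₂v₃v₁` can be extended by the blue edge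
`v₅v₆`, because `v₄v₅` is red. If it is red, `v₁v₅` is forced to be blue and Builder plays `v₁v₄`:
a blue answer lets him extend the blue path `v₄v₁v₅v₆` by the blue edge `v₂v₃`, and a red one lets
him add a new vertex to the blue path `v₂v₃v₁v₅v₆`.
-/

variable {V W : Type*} {G : SimpleGraph V} {H : SimpleGraph W} {R R' B B' S T : Set (Sym2 ℕ)}

theorem HasCopy.mono (h : HasCopy G S) (hST : S ⊆ T) : HasCopy G T :=
  let ⟨f, hf, hfS⟩ := h
  ⟨f, hf, fun a b hab => hST (hfS a b hab)⟩

/-- `l` lists, in order, the vertices of a path all of whose edges lie in `S`. Coding paths as lists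
reduces joining two monochromatic paths by a new edge to `List.append`. -/
def IsPathIn (S : Set (Sym2 ℕ)) (l : List ℕ) : Prop :=
  l.Nodup ∧ l.IsChain (s(·, ·) ∈ S)

namespace IsPathIn

variable {l m : List ℕ} {a b : ℕ}

theorem mono (h : IsPathIn S l) (hST : S ⊆ T) : IsPathIn T l :=
  ⟨h.1, h.2.imp fun _ _ hab => hST hab⟩

theorem reverse (h : IsPathIn S l) : IsPathIn S l.reverse := by
  refine ⟨List.nodup_reverse.2 h.1, List.isChain_reverse.2 ?_⟩
  simpa only [Sym2.eq_swap] using h.2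

theorem append_insert (hl : IsPathIn S (l ++ [a])) (hm : IsPathIn S (b :: m))
    (hdisj : (l ++ [a]).Disjoint (b :: m)) :
    IsPathIn (insert s(a, b) S) ((l ++ [a]) ++ b :: m) := by
  have hsub := Set.subset_insert s(a, b) S
  exact ⟨hl.1.append hm.1 hdisj, (hl.mono hsub).2.append (hm.mono hsub).2 (by simp)⟩

theorem hasCopy_pathGraph (h : IsPathIn S l) : HasCopy (pathGraph l.length) S := by
  refine ⟨l.get, List.nodup_iff_injective_get.1 h.1, fun i j hij => ?_⟩
  rcases pathGraph_adj.1 hij with hij | hij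
  · simpa [hij] using h.2.getElem i (by lia)
  · simpa [← hij, Sym2.eq_swap] using h.2.getElem j (by lia)

theorem hasCopy_cycleGraph (h : IsPathIn S l) (hne : l ≠ [])
    (hclose : s(l.head hne, l.getLast hne) ∈ S) : HasCopy (cycleGraph l.length) S := by
  have mem_of_sub_eq_one (i j : Fin l.length) (hij : (i - j).val = 1) :
      s(l.get j, l.get i) ∈ S := by
    rcases le_or_gt j i with hle | hlt
    · have hi : i.val = j + 1 := by
        have := Fin.sub_val_of_le hle
        lia
      simpa [hi] using h.2.getElem j (by lia)
    · have hwrap : i.val = 0 ∧ j.val = l.length - 1 := by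
        have := Fin.coe_sub_iff_lt.2 hlt
        lia
      rw [List.head_eq_getElem, List.getLast_eq_getElem] at hclose
      simpa [hwrap, Sym2.eq_swap] using hclose
  refine ⟨l.get, List.nodup_iff_injective_get.1 h.1, fun i j hij => ?_⟩
  rcases cycleGraph_adj'.1 hij with hij | hij
  · exact Sym2.eq_swap ▸ mem_of_sub_eq_one i j hij
  · exact mem_of_sub_eq_one j i hij

end IsPathIn

namespace BuilderWinsIn

variable {r r' : ℕ}

theorem of_hasCopy (h : HasCopy G R ∨ HasCopy H B) : BuilderWinsIn G H R B r := by
  cases r with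
  | zero => exact h
  | succ r => exact h.imp_right Or.inl

theorem mono (h : BuilderWinsIn G H R B r) (hR : R ⊆ R') (hB : B ⊆ B') (hr : r ≤ r') :
    BuilderWinsIn G H R' B' r' := by
  induction r generalizing R R' B B' r' with
  | zero => exact of_hasCopy (h.imp (·.mono hR) (·.mono hB))
  | succ r ih =>
    obtain ⟨r', rfl⟩ := Nat.exists_eq_add_of_lt hr
    rcases h with h | h | ⟨e, he, -, -, hred, hblue⟩
    · exact of_hasCopy (.inl (h.mono hR))
    · exact of_hasCopy (.inr (h.mono hB))
    by_cases heR : e ∈ R'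
    · exact ih hred (Set.insert_subset heR hR) hB (by lia)
    by_cases heB : e ∈ B'
    · exact ih hblue hR (Set.insert_subset heB hB) (by lia)
    exact .inr (.inr ⟨e, he, heR, heB,
      ih hred (Set.insert_subset_insert hR) hB (by lia),
      ih hblue hR (Set.insert_subset_insert hB) (by lia)⟩)

/-- By monotonicity, replaying an edge that already has a color only wastes a round. -/
theorem of_edge (x y : ℕ) (hxy : x ≠ y) (hred : BuilderWinsIn G H (insert s(x, y) R) B r)
    (hblue : BuilderWinsIn G H R (insert s(x, y) B) r) : BuilderWinsIn G H R B (r + 1) := by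
  by_cases hR : s(x, y) ∈ R
  · exact (Set.insert_eq_of_mem hR ▸ hred).mono subset_rfl subset_rfl r.le_succ
  by_cases hB : s(x, y) ∈ B
  · exact (Set.insert_eq_of_mem hB ▸ hblue).mono subset_rfl subset_rfl r.le_succ
  exact .inr (.inr ⟨s(x, y), by simpa using hxy, hR, hB, hred, hblue⟩)

theorem of_bluePath {l : List ℕ} {n : ℕ} (h : IsPathIn B l) (hl : l.length = n) :
    BuilderWinsIn G (pathGraph n) R B r :=
  of_hasCopy (.inr (hl ▸ h.hasCopy_pathGraph))

theorem of_bluePaths_of_insert_red {l m : List ℕ} {a b n : ℕ} (hl : IsPathIn B (l ++ [a]))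
    (hm : IsPathIn B (b :: m)) (hdisj : (l ++ [a]).Disjoint (b :: m))
    (hn : l.length + m.length + 2 = n)
    (hred : BuilderWinsIn G (pathGraph n) (insert s(a, b) R) B r) :
    BuilderWinsIn G (pathGraph n) R B (r + 1) := by
  have hab : a ≠ b := by rintro rfl; simp at hdisj
  exact of_edge a b hab hred (of_bluePath (hl.append_insert hm hdisj) (by simp; lia))

theorem of_redPath_of_insert_blue (a b c d : ℕ) (h : IsPathIn R [a, b, c, d])
    (hblue : BuilderWinsIn (cycleGraph 4) H R (insert s(a, d) B) r) :
    BuilderWinsIn (cycleGraph 4) H R B (r + 1) := by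
  have hcycle : HasCopy (cycleGraph 4) (insert s(a, d) R) :=
    (h.mono (Set.subset_insert _ _)).hasCopy_cycleGraph (by simp) (by simp)
  exact of_edge a d (by simp_all [IsPathIn]) (of_hasCopy (.inl hcycle)) hblue

theorem of_bluePath_of_blueEdge_of_redEdges {l : List ℕ} {a d x y : ℕ}
    (hpath : IsPathIn B (a :: l ++ [d])) (hedge : IsPathIn B [x, y])
    (hdisj : (a :: l ++ [d]).Disjoint [x, y]) (hax : s(a, x) ∈ R) (hay : s(a, y) ∈ R) :
    BuilderWinsIn (cycleGraph 4) (pathGraph (l.length + 4)) R B 2 := by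
  refine of_bluePaths_of_insert_red hpath hedge hdisj (by simp) ?_
  have hredPath : IsPathIn (insert s(d, x) R) [d, x, a, y] := by
    simp_all [IsPathIn, List.nodup_append, Sym2.eq_swap, eq_comm]
  refine of_redPath_of_insert_blue d x a y hredPath ?_
  exact of_bluePath (hpath.append_insert hedge.reverse (by simp_all [eq_comm])) (by simp)

theorem of_bluePath_of_blueEdge_of_redEdge {l : List ℕ} {a d x y : ℕ}
    (hpath : IsPathIn B (a :: l ++ [d])) (hedge : IsPathIn B [x, y])
    (hdisj : (a :: l ++ [d]).Disjoint [x, y]) (hax : s(a, x) ∈ R) :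
    BuilderWinsIn (cycleGraph 4) (pathGraph (l.length + 4)) R B 3 := by
  have hpath' : IsPathIn B (d :: l.reverse ++ [a]) := by simpa using hpath.reverse
  refine of_bluePaths_of_insert_red hpath' hedge.reverse (by simp_all [eq_comm]) (by simp) ?_
  exact of_bluePath_of_blueEdge_of_redEdges hpath hedge hdisj (.inr hax) (.inl rfl)

variable {v₁ v₂ v₃ v₄ v₅ v₆ : ℕ}

theorem of_redPath_of_bluePaths (hv : [v₁, v₂, v₃, v₄, v₅, v₆].Nodup)
    (hR : IsPathIn R [v₁, v₃, v₄, v₅]) (hB : IsPathIn B [v₃, v₂, v₄])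
    (hB' : IsPathIn B [v₁, v₅, v₆]) :
    BuilderWinsIn (cycleGraph 4) (pathGraph 6) R B 3 := by
  refine of_bluePaths_of_insert_red (l := [v₃, v₂]) hB hB' (by simp_all [eq_comm]) rfl ?_
  refine of_edge v₁ v₆ (by simp_all [IsPathIn, eq_comm]) ?_ ?_
  · refine of_redPath_of_insert_blue v₃ v₄ v₁ v₆ (by simp_all [IsPathIn, Sym2.eq_swap, eq_comm]) ?_
    have hpath : IsPathIn (insert s(v₃, v₆) B) [v₁, v₅, v₆, v₃, v₂, v₄] := by
      simp_all [IsPathIn, Sym2.eq_swap, eq_comm]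
    exact of_bluePath hpath rfl
  · refine of_redPath_of_insert_blue v₃ v₁ v₄ v₅ (by simp_all [IsPathIn, Sym2.eq_swap, eq_comm]) ?_
    have hpath : IsPathIn (insert s(v₃, v₅) (insert s(v₁, v₆) B)) [v₁, v₆, v₅, v₃, v₂, v₄] := by
      simp_all [IsPathIn, Sym2.eq_swap, eq_comm]
    exact of_bluePath hpath rfl

theorem of_redPath_of_blueEdges (hv : [v₁, v₂, v₃, v₄, v₅, v₆].Nodup)
    (hR : IsPathIn R [v₂, v₁, v₃, v₄, v₅]) (h₂₃ : s(v₂, v₃) ∈ B) (h₅₆ : s(v₅, v₆) ∈ B) :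
    BuilderWinsIn (cycleGraph 4) (pathGraph 6) R B 5 := by
  refine of_redPath_of_insert_blue v₂ v₁ v₃ v₄ (by simp_all [IsPathIn, eq_comm]) ?_
  refine of_redPath_of_insert_blue v₁ v₃ v₄ v₅ (by simp_all [IsPathIn, eq_comm]) ?_
  apply of_redPath_of_bluePaths hv <;> simp_all [IsPathIn, Sym2.eq_swap, eq_comm]

theorem of_bluePath_of_redTriangle (hB : IsPathIn B [v₂, v₃, v₁, v₅, v₆])
    (hR : IsPathIn R [v₂, v₁, v₄, v₅]) (h₂₄ : s(v₂, v₄) ∈ R) :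
    BuilderWinsIn (cycleGraph 4) (pathGraph 6) R B 2 := by
  obtain ⟨u, hu⟩ := Infinite.exists_notMem_finset {v₁, v₂, v₃, v₄, v₅, v₆}
  refine of_edge v₁ u (by grind) ?_ ?_
  · refine of_redPath_of_insert_blue v₂ v₄ v₁ u (by simp_all [IsPathIn, Sym2.eq_swap, eq_comm]) ?_
    have hpath : IsPathIn (insert s(v₂, u) B) [u, v₂, v₃, v₁, v₅, v₆] := by
      simp_all [IsPathIn, Sym2.eq_swap, eq_comm]
    exact of_bluePath hpath rfl
  · refine of_redPath_of_insert_blue v₂ v₁ v₄ v₅ hR ?_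
    have hpath : IsPathIn (insert s(v₂, v₅) (insert s(v₁, u) B)) [u, v₁, v₃, v₂, v₅, v₆] := by
      simp_all [IsPathIn, Sym2.eq_swap, eq_comm]
    exact of_bluePath hpath rfl

theorem of_redSpider (hv : [v₁, v₂, v₃, v₄, v₅, v₆].Nodup)
    (hR : IsPathIn R [v₁, v₂, v₄, v₅]) (h₃₄ : s(v₃, v₄) ∈ R)
    (hB : IsPathIn B [v₂, v₃, v₁]) (hB' : IsPathIn B [v₅, v₆]) :
    BuilderWinsIn (cycleGraph 4) (pathGraph 6) R B 4 := by
  refine of_redPath_of_insert_blue v₁ v₂ v₄ v₅ hR ?_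
  have hpath : IsPathIn (insert s(v₁, v₅) B) [v₂, v₃, v₁, v₅, v₆] :=
    hB.append_insert (l := [v₂, v₃]) hB' (by simp_all [eq_comm])
  refine of_edge v₁ v₄ (by simp_all [IsPathIn, eq_comm]) ?_ ?_
  · have hredPath : IsPathIn (insert s(v₁, v₄) R) [v₂, v₁, v₄, v₅] := by
      simp_all [IsPathIn, Sym2.eq_swap, eq_comm]
    exact of_bluePath_of_redTriangle hpath hredPath (by simp_all [IsPathIn])
  · have hpath' : IsPathIn (insert s(v₁, v₄) (insert s(v₁, v₅) B)) [v₄, v₁, v₅, v₆] := by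
      simp_all [IsPathIn, Sym2.eq_swap, eq_comm]
    have hedge : IsPathIn (insert s(v₁, v₄) (insert s(v₁, v₅) B)) [v₂, v₃] := by
      simp_all [IsPathIn]
    exact of_bluePath_of_blueEdge_of_redEdges (l := [v₁, v₅]) hpath' hedge
      (by simp_all [eq_comm]) (by simp_all [IsPathIn, Sym2.eq_swap]) (by rwa [Sym2.eq_swap])

theorem of_bluePath_of_redEdges (hv : [v₁, v₂, v₃, v₄, v₅, v₆].Nodup)
    (h₁₂ : s(v₁, v₂) ∈ R) (h₃₄ : s(v₃, v₄) ∈ R) (h₄₅ : s(v₄, v₅) ∈ R)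
    (hB : IsPathIn B [v₂, v₃, v₁]) (h₅₆ : s(v₅, v₆) ∈ B) :
    BuilderWinsIn (cycleGraph 4) (pathGraph 6) R B 5 := by
  have hB' : IsPathIn B [v₅, v₆] := by simp_all [IsPathIn, eq_comm]
  refine of_edge v₂ v₄ (by grind) ?_ ?_
  · exact of_redSpider hv (by simp_all [IsPathIn, eq_comm]) (by grind) hB hB'
  · have hsub := Set.subset_insert s(v₂, v₄) B
    have hpath : IsPathIn (insert s(v₂, v₄) B) [v₄, v₂, v₃, v₁] := by
      simp_all [IsPathIn, Sym2.eq_swap, eq_comm]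
    exact (of_bluePath_of_blueEdge_of_redEdge (l := [v₂, v₃]) hpath (hB'.mono hsub)
      (by simp_all [eq_comm]) h₄₅).mono subset_rfl subset_rfl (by simp)

theorem of_case_R7 (hv : [v₁, v₂, v₃, v₄, v₅, v₆].Nodup)
    (h₁₂ : s(v₁, v₂) ∈ R) (h₃₄ : s(v₃, v₄) ∈ R) (h₄₅ : s(v₄, v₅) ∈ R)
    (h₂₃ : s(v₂, v₃) ∈ B) (h₅₆ : s(v₅, v₆) ∈ B) :
    BuilderWinsIn (cycleGraph 4) (pathGraph 6) R B 6 := by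
  refine of_edge v₁ v₃ (by grind) ?_ ?_
  · apply of_redPath_of_blueEdges hv <;> simp_all [IsPathIn, Sym2.eq_swap, eq_comm]
  · apply of_bluePath_of_redEdges hv h₁₂ h₃₄ h₄₅ <;> simp_all [IsPathIn, Sym2.eq_swap, eq_comm]

end BuilderWinsIn

/-- Case `R7`: in the online Ramsey game with targets red `C₄` and blue `P₆`,
from the position in which the five edges `v₁v₂, v₂v₃, v₃v₄, v₄v₅, v₅v₆` of a path on
six distinct vertices have been colored red, blue, red, red, blue respectively,
Builder can force a red copy of `C₄` or a blue copy of `P₆` within at most 6 additional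
rounds (so within at most 11 rounds in total). -/
theorem builder_wins_case_R7 (v : Fin 6 → ℕ) (hv : Function.Injective v) :
    BuilderWinsIn (cycleGraph 4) (pathGraph 6)
      {s(v 0, v 1), s(v 2, v 3), s(v 3, v 4)}
      {s(v 1, v 2), s(v 4, v 5)} 6 := by
  have hnodup : [v 0, v 1, v 2, v 3, v 4, v 5].Nodup := List.nodup_ofFn.2 hv
  exact .of_case_R7 hnodup (by simp) (by simp) (by simp) (by simp) (by simp)
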